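/- arXiv:2605.26670 — 5 statements merged into one kernel-verified Lean document; each statement's English description precedes it below -/
import Mathlib

section
/- Fix W₀ ∈ ℝ^{d_o×d_i}, a matrix P ∈ ℝ^{d_i×d_i}, and for each step τ = 1, …, t matrices K_τ ∈ ℝ^{d_i×m_τ} and V_τ ∈ ℝ^{d_o×m_τ}. Assume for every s with 1 ≤ s ≤ t that the matrix (∑_{τ=1}^{s} K_τ K_τᵀ) P + I is invertible. Define sequential updates recursively by W_s = W_{s−1} + Δ_s* where Δ_s* := (V_s − W_{s−1} K_s) K_sᵀ P ((∑_{τ=1}^{s} K_τ K_τᵀ) P + I)⁻¹. Let R′_τ := V_τ − W₀ K_τ and define the batch (one-time editing) update Δ_{total,t}* := (∑_{τ=1}^{t} R′_τ K_τᵀ P) ((∑_{τ=1}^{t} K_τ K_τᵀ) P + I)⁻¹. Then ∑_{τ=1}^{t} Δ_τ* = Δ_{total,t}*. -/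
open Matrix BigOperators

noncomputable section

theorem alphaedit_ote_se_equivalence
    {dOut dIn : ℕ} (t : ℕ) {m : ℕ → ℕ}
    (W₀ : Matrix (Fin dOut) (Fin dIn) ℝ)
    (P : Matrix (Fin dIn) (Fin dIn) ℝ)
    (K : (τ : ℕ) → Matrix (Fin dIn) (Fin (m τ)) ℝ)
    (V : (τ : ℕ) → Matrix (Fin dOut) (Fin (m τ)) ℝ)
    (hinv : ∀ s, 1 ≤ s → s ≤ t →
      Invertible ((∑ τ ∈ Finset.Icc 1 s, K τ * (K τ)ᵀ) * P + 1))
    (W Δ : ℕ → Matrix (Fin dOut) (Fin dIn) ℝ)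
    (hW₀ : W 0 = W₀)
    (hΔ : ∀ s, 1 ≤ s → s ≤ t →
      Δ s = (V s - W (s - 1) * K s) * (K s)ᵀ * P *
        ((∑ τ ∈ Finset.Icc 1 s, K τ * (K τ)ᵀ) * P + 1)⁻¹)
    (hW : ∀ s, 1 ≤ s → s ≤ t → W s = W (s - 1) + Δ s) :
    ∑ τ ∈ Finset.Icc 1 t, Δ τ =
      (∑ τ ∈ Finset.Icc 1 t, (V τ - W₀ * K τ) * (K τ)ᵀ) * P *
        ((∑ τ ∈ Finset.Icc 1 t, K τ * (K τ)ᵀ) * P + 1)⁻¹ := by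
  have key : ∀ s, s ≤ t → W s = W₀ + ∑ τ ∈ Finset.Icc 1 s, Δ τ ∧
      (∑ τ ∈ Finset.Icc 1 s, Δ τ) * ((∑ τ ∈ Finset.Icc 1 s, K τ * (K τ)ᵀ) * P + 1) =
        (∑ τ ∈ Finset.Icc 1 s, (V τ - W₀ * K τ) * (K τ)ᵀ) * P := by
    intro s
    induction s with
    | zero => intro _; simp [hW₀]
    | succ s ih =>
      intro hs
      obtain ⟨h1, h2⟩ := ih (by omega)
      have hw := hW (s + 1) (by omega) hs
      have hd := hΔ (s + 1) (by omega) hs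
      letI := hinv (s + 1) (by omega) hs
      have hd' : Δ (s + 1) * ((∑ τ ∈ Finset.Icc 1 (s + 1), K τ * (K τ)ᵀ) * P + 1) =
          (V (s + 1) - W s * K (s + 1)) * (K (s + 1))ᵀ * P := by
        rw [hd, Matrix.inv_mul_cancel_right_of_invertible]
        rfl
      refine ⟨?_, ?_⟩
      · rw [hw, Nat.add_sub_cancel, h1, Finset.sum_Icc_succ_top (by omega), add_assoc]
      · rw [Finset.sum_Icc_succ_top (by omega) Δ, Matrix.add_mul, hd', h1,
          Finset.sum_Icc_succ_top (by omega), Finset.sum_Icc_succ_top (by omega)]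
        rw [Matrix.add_mul _ _ P, Matrix.add_mul _ _ P, ← h2]
        simp only [Matrix.add_mul, Matrix.mul_add, Matrix.sub_mul, Matrix.mul_assoc]
        abel
  rcases Nat.eq_zero_or_pos t with h0 | hp
  · subst h0; simp
  · letI := hinv t hp le_rfl
    rw [← (key t le_rfl).2, Matrix.mul_inv_cancel_right_of_invertible]
end
end

section
/- Fix W₀ ∈ ℝ^{d_o×d_i}, an arbitrary matrix P ∈ ℝ^{d_i×d_i}, a scalar λ ≥ 0, a preserved-knowledge key matrix K₀ ∈ ℝ^{d_i×m₀}, and for each step τ = 1, …, t matrices K_τ ∈ ℝ^{d_i×m_τ} and V_τ ∈ ℝ^{d_o×m_τ}. Assume for every s with 1 ≤ s ≤ t that the matrix K₀K₀ᵀ P + (∑_{τ=1}^{s} K_τ K_τᵀ) P + λI is invertible. Define sequential updates recursively by W_s = W_{s−1} + Δ_s* where Δ_s* := (V_s − W_{s−1} K_s) K_sᵀ P (K₀K₀ᵀ P + (∑_{τ=1}^{s} K_τ K_τᵀ) P + λI)⁻¹. Let R′_τ := V_τ − W₀ K_τ and define the batch update Δ_{total,t}* := (∑_{τ=1}^{t}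 R′_τ K_τᵀ P) (K₀K₀ᵀ P + (∑_{τ=1}^{t} K_τ K_τᵀ) P + λI)⁻¹. Then ∑_{τ=1}^{t} Δ_τ* = Δ_{total,t}*. -/
open Matrix BigOperators

noncomputable section

theorem generalized_ote_se_equivalence
    {dOut dIn m₀ : ℕ} (t : ℕ) {m : ℕ → ℕ}
    (W₀ : Matrix (Fin dOut) (Fin dIn) ℝ)
    (P : Matrix (Fin dIn) (Fin dIn) ℝ)
    (lam : ℝ) (hlam : 0 ≤ lam)
    (K₀ : Matrix (Fin dIn) (Fin m₀) ℝ)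
    (K : (τ : ℕ) → Matrix (Fin dIn) (Fin (m τ)) ℝ)
    (V : (τ : ℕ) → Matrix (Fin dOut) (Fin (m τ)) ℝ)
    (hinv : ∀ s, 1 ≤ s → s ≤ t →
      Invertible (K₀ * K₀ᵀ * P + (∑ τ ∈ Finset.Icc 1 s, K τ * (K τ)ᵀ) * P + lam • (1 : Matrix (Fin dIn) (Fin dIn) ℝ)))
    (W Δ : ℕ → Matrix (Fin dOut) (Fin dIn) ℝ)
    (hW₀ : W 0 = W₀)
    (hΔ : ∀ s, 1 ≤ s → s ≤ t →
      Δ s = (V s - W (s - 1) * K s) * (K s)ᵀ * P *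
        (K₀ * K₀ᵀ * P + (∑ τ ∈ Finset.Icc 1 s, K τ * (K τ)ᵀ) * P + lam • (1 : Matrix (Fin dIn) (Fin dIn) ℝ))⁻¹)
    (hW : ∀ s, 1 ≤ s → s ≤ t → W s = W (s - 1) + Δ s) :
    ∑ τ ∈ Finset.Icc 1 t, Δ τ =
      (∑ τ ∈ Finset.Icc 1 t, (V τ - W₀ * K τ) * (K τ)ᵀ) * P *
        (K₀ * K₀ᵀ * P + (∑ τ ∈ Finset.Icc 1 t, K τ * (K τ)ᵀ) * P + lam • (1 : Matrix (Fin dIn) (Fin dIn) ℝ))⁻¹ := by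
  have key : ∀ s, s ≤ t → W s = W₀ + ∑ τ ∈ Finset.Icc 1 s, Δ τ ∧
      (∑ τ ∈ Finset.Icc 1 s, Δ τ) * (K₀ * K₀ᵀ * P + (∑ τ ∈ Finset.Icc 1 s, K τ * (K τ)ᵀ) * P + lam • (1 : Matrix (Fin dIn) (Fin dIn) ℝ))
        = (∑ τ ∈ Finset.Icc 1 s, (V τ - W₀ * K τ) * (K τ)ᵀ) * P := by
    intro s
    induction s with
    | zero => intro _; simp [hW₀]
    | succ s ih =>
      intro hs
      obtain ⟨h1, h2⟩ := ih (by omega)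
      have hd := hΔ (s + 1) (by omega) hs
      have hw := hW (s + 1) (by omega) hs
      haveI := hinv (s + 1) (by omega) hs
      have hd2 := congrArg (fun X => X * (K₀ * K₀ᵀ * P + (∑ τ ∈ Finset.Icc 1 (s + 1), K τ * (K τ)ᵀ) * P + lam • (1 : Matrix (Fin dIn) (Fin dIn) ℝ))) hd
      simp only [Matrix.inv_mul_cancel_right_of_invertible] at hd2
      simp only [Nat.add_sub_cancel] at hw hd2
      refine ⟨?_, ?_⟩
      · rw [hw, h1, Finset.sum_Icc_succ_top (by omega), add_assoc]
      · rw [Finset.sum_Icc_succ_top (by omega) (f := Δ), Matrix.add_mul, hd2,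
          Finset.sum_Icc_succ_top (by omega), Finset.sum_Icc_succ_top (by omega),
          Matrix.add_mul _ _ P, Matrix.add_mul _ _ P, ← h2, h1]
        simp only [Matrix.add_mul, Matrix.mul_add, Matrix.sub_mul, Matrix.mul_assoc]
        abel
  rcases Nat.eq_zero_or_pos t with h0 | h0
  · subst h0; simp
  · haveI := hinv t h0 le_rfl
    rw [← (key t le_rfl).2, Matrix.mul_inv_cancel_right_of_invertible]
end
end

section
/- (Sequential MEMIT reconstructs one-time MEMIT.) Fix W₀ ∈ ℝ^{d_o×d_i}, K₀ ∈ ℝ^{d_i×m₀}, and for each step τ = 1, …, t matrices K_τ ∈ ℝ^{d_i×m_τ} and V_τ ∈ ℝ^{d_o×m_τ}. Assume for every s with 1 ≤ s ≤ t that K₀K₀ᵀ + ∑_{τ=1}^{s} K_τ K_τᵀ is invertible. Define sequential updates recursively by W_s = W_{s−1} + Δ_s* where Δ_s* := (V_s − W_{s−1} K_s) K_sᵀ (K₀K₀ᵀ + ∑_{τ=1}^{s} K_τ K_τᵀ)⁻¹. Then ∑_{τ=1}^{t} Δ_τ* = (∑_{τ=1}^{t} (V_τ − W₀ K_τ) K_τᵀ)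 (K₀K₀ᵀ + ∑_{τ=1}^{t} K_τ K_τᵀ)⁻¹. -/
open Matrix BigOperators

noncomputable section

theorem sequential_memit_reconstructs_one_time_memit
    {dOut dIn m₀ : ℕ} (t : ℕ) {m : ℕ → ℕ}
    (W₀ : Matrix (Fin dOut) (Fin dIn) ℝ)
    (K₀ : Matrix (Fin dIn) (Fin m₀) ℝ)
    (K : (τ : ℕ) → Matrix (Fin dIn) (Fin (m τ)) ℝ)
    (V : (τ : ℕ) → Matrix (Fin dOut) (Fin (m τ)) ℝ)
    (hinv : ∀ s, 1 ≤ s → s ≤ t →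
      Invertible (K₀ * K₀ᵀ + ∑ τ ∈ Finset.Icc 1 s, K τ * (K τ)ᵀ))
    (W Δ : ℕ → Matrix (Fin dOut) (Fin dIn) ℝ)
    (hW₀ : W 0 = W₀)
    (hΔ : ∀ s, 1 ≤ s → s ≤ t →
      Δ s = (V s - W (s - 1) * K s) * (K s)ᵀ *
        (K₀ * K₀ᵀ + ∑ τ ∈ Finset.Icc 1 s, K τ * (K τ)ᵀ)⁻¹)
    (hW : ∀ s, 1 ≤ s → s ≤ t → W s = W (s - 1) + Δ s) :
    ∑ τ ∈ Finset.Icc 1 t, Δ τ =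
      (∑ τ ∈ Finset.Icc 1 t, (V τ - W₀ * K τ) * (K τ)ᵀ) *
        (K₀ * K₀ᵀ + ∑ τ ∈ Finset.Icc 1 t, K τ * (K τ)ᵀ)⁻¹ := by
  have key : ∀ s, s ≤ t → W s = W₀ + ∑ τ ∈ Finset.Icc 1 s, Δ τ ∧
      (∑ τ ∈ Finset.Icc 1 s, Δ τ) * (K₀ * K₀ᵀ + ∑ τ ∈ Finset.Icc 1 s, K τ * (K τ)ᵀ) =
        ∑ τ ∈ Finset.Icc 1 s, (V τ - W₀ * K τ) * (K τ)ᵀ := by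
    intro s
    induction s with
    | zero => intro _; simp [hW₀]
    | succ s ih =>
      intro hs
      obtain ⟨h1, h2⟩ := ih (by omega)
      have hw := hW (s + 1) (by omega) hs
      have hd := hΔ (s + 1) (by omega) hs
      have hi := hinv (s + 1) (by omega) hs
      rw [Nat.add_sub_cancel] at hw hd
      have hd2 : Δ (s + 1) * (K₀ * K₀ᵀ + ∑ τ ∈ Finset.Icc 1 (s + 1), K τ * (K τ)ᵀ) =
          (V (s + 1) - W s * K (s + 1)) * (K (s + 1))ᵀ := by
        rw [hd, Matrix.mul_assoc _ _ (K₀ * K₀ᵀ + _), Matrix.inv_mul_of_invertible,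
          Matrix.mul_one]
      refine ⟨?_, ?_⟩
      · rw [hw, h1, Finset.sum_Icc_succ_top (by omega), add_assoc]
      · rw [Finset.sum_Icc_succ_top (by omega) Δ, Matrix.add_mul, hd2,
          Finset.sum_Icc_succ_top (by omega), ← add_assoc, Matrix.mul_add, h2,
          Finset.sum_Icc_succ_top (by omega), h1]
        simp only [Matrix.sub_mul, Matrix.add_mul, Matrix.mul_assoc]
        abel
  rcases Nat.eq_zero_or_pos t with h0 | h0
  · subst h0; simp
  · have hi := hinv t h0 le_rfl
    rw [← (key t le_rfl).2, Matrix.mul_assoc, Matrix.mul_inv_of_invertible, Matrix.mul_one]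
end
end

section
/- (Error correction restores equivalence to one-time editing under post-processing regularization.) Fix W₀ ∈ ℝ^{d_o×d_i}, K₀ ∈ ℝ^{d_i×m₀} with V₀ := W₀K₀, key–value matrices K_τ ∈ ℝ^{d_i×m_τ}, V_τ ∈ ℝ^{d_o×m_τ} for τ = 1, …, T, and an arbitrary map ℛ_p : ℝ^{d_o×d_i} → ℝ^{d_o×d_i}. Define C_t := K₀K₀ᵀ + ∑_{τ=1}^{t} K_τK_τᵀ and assume C_t is invertible for all 1 ≤ t ≤ T. Define recursively E₀ := 0, W₀^ℛ := W₀, and for t ≥ 1: Δ_t := ((V_t − W_{t−1}^ℛ K_t)K_tᵀ − E_{t−1}) C_t⁻¹, W_t^ℛ := W_{t−1}^ℛ + ℛ_p(Δ_t), E_t := (ℛ_p(Δ_t) − Δ_t) C_t. Define the one-time editing update Δ_{total,t} := (∑_{τ=1}^{t} (V_τ − W₀K_τ)K_τᵀ) C_t⁻¹. Then for every t with 1 ≤ t ≤ T, W_{t−1}^ℛ + Δ_t = W₀ + Δ_{total,t}. -/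
open Matrix BigOperators

noncomputable section

theorem error_correction_restores_ote_equivalence
    {dOut dIn m₀ : ℕ} (T : ℕ) {m : ℕ → ℕ}
    (W₀ : Matrix (Fin dOut) (Fin dIn) ℝ)
    (K₀ : Matrix (Fin dIn) (Fin m₀) ℝ)
    (K : (τ : ℕ) → Matrix (Fin dIn) (Fin (m τ)) ℝ)
    (V : (τ : ℕ) → Matrix (Fin dOut) (Fin (m τ)) ℝ)
    (Rp : Matrix (Fin dOut) (Fin dIn) ℝ → Matrix (Fin dOut) (Fin dIn) ℝ)
    (C : ℕ → Matrix (Fin dIn) (Fin dIn) ℝ)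
    (hC : ∀ t : ℕ, C t = K₀ * K₀ᵀ + ∑ τ ∈ Finset.Icc 1 t, K τ * (K τ)ᵀ)
    (hCinv : ∀ t, 1 ≤ t → t ≤ T → Invertible (C t))
    (WR Δ Err : ℕ → Matrix (Fin dOut) (Fin dIn) ℝ)
    (hE₀ : Err 0 = 0)
    (hWR₀ : WR 0 = W₀)
    (hΔ : ∀ t, 1 ≤ t → t ≤ T →
      Δ t = ((V t - WR (t - 1) * K t) * (K t)ᵀ - Err (t - 1)) * (C t)⁻¹)
    (hWR : ∀ t, 1 ≤ t → t ≤ T → WR t = WR (t - 1) + Rp (Δ t))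
    (hErr : ∀ t, 1 ≤ t → t ≤ T → Err t = (Rp (Δ t) - Δ t) * C t) :
    ∀ t, 1 ≤ t → t ≤ T →
      WR (t - 1) + Δ t =
        W₀ + (∑ τ ∈ Finset.Icc 1 t, (V τ - W₀ * K τ) * (K τ)ᵀ) * (C t)⁻¹ := by
  have hCs : ∀ t, C (t + 1) = C t + K (t + 1) * (K (t + 1))ᵀ := by
    intro t
    rw [hC, hC, Finset.sum_Icc_succ_top (by omega), add_assoc]
  have hdet : ∀ t, 1 ≤ t → t ≤ T → IsUnit (C t).det := fun t h1 h2 =>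
    (Matrix.isUnit_iff_isUnit_det _).1 (@isUnit_of_invertible _ _ _ (hCinv t h1 h2))
  have hstep : ∀ t, t + 1 ≤ T →
      (WR t - W₀) * C t - Err t = ∑ τ ∈ Finset.Icc 1 t, (V τ - W₀ * K τ) * (K τ)ᵀ →
      (WR t + Δ (t + 1) - W₀) * C (t + 1) =
        ∑ τ ∈ Finset.Icc 1 (t + 1), (V τ - W₀ * K τ) * (K τ)ᵀ := by
    intro t ht ih
    have h1 : Δ (t + 1) * C (t + 1) =
        (V (t + 1) - WR t * K (t + 1)) * (K (t + 1))ᵀ - Err t := by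
      rw [hΔ (t + 1) (by omega) ht, Matrix.nonsing_inv_mul_cancel_right _ _ (hdet _ (by omega) ht)]
      simp
    rw [Finset.sum_Icc_succ_top (by omega), ← ih, Matrix.sub_mul, Matrix.add_mul, h1, hCs]
    simp only [Matrix.sub_mul, Matrix.mul_add, Matrix.mul_assoc]
    abel
  have hinv : ∀ t, t ≤ T →
      (WR t - W₀) * C t - Err t = ∑ τ ∈ Finset.Icc 1 t, (V τ - W₀ * K τ) * (K τ)ᵀ := by
    intro t
    induction t with
    | zero => intro _; simp [hE₀, hWR₀]
    | succ t ih =>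
      intro ht
      rw [← hstep t ht (ih (by omega)), hErr (t + 1) (by omega) ht, hWR (t + 1) (by omega) ht,
        ← Matrix.sub_mul]
      congr 1
      simp only [Nat.add_sub_cancel]
      abel
  intro t h1 h2
  obtain ⟨s, rfl⟩ : ∃ s, t = s + 1 := ⟨t - 1, by omega⟩
  rw [← hstep s h2 (hinv s (by omega)), Matrix.mul_nonsing_inv_cancel_right _ _ (hdet _ h1 h2)]
  simp only [Nat.add_sub_cancel]
  abel
end
end

section
/- (The error-correction term equals the negative cumulative residual.) Under the recursive definitions E₀ := 0, W₀^ℛ := W₀, Δ_t := ((V_t − W_{t−1}^ℛ K_t)K_tᵀ − E_{t−1}) C_t⁻¹, W_t^ℛ := W_{t−1}^ℛ + ℛ_p(Δ_t), E_t := (ℛ_p(Δ_t) − Δ_t) C_t, with C_t := K₀K₀ᵀ + ∑_{τ=1}^{t} K_τK_τᵀ invertible for all t, V₀ := W₀K₀, and ℛ_p : ℝ^{d_o×d_i} → ℝ^{d_o×d_i} arbitrary, it holds for every t ≥ 1 that E_{t−1} = −∑_{τ=0}^{t−1} (V_τ − W_{t−1}^ℛ K_τ) K_τᵀ; equivalently,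 Δ_t satisfies the cumulative normal equation Δ_t C_t = ∑_{τ=0}^{t} (V_τ − W_{t−1}^ℛ K_τ) K_τᵀ. -/
open Matrix BigOperators

noncomputable section

theorem error_correction_equals_negative_cumulative_residual
    {dOut dIn : ℕ} {m : ℕ → ℕ}
    (W₀ : Matrix (Fin dOut) (Fin dIn) ℝ)
    (K : (τ : ℕ) → Matrix (Fin dIn) (Fin (m τ)) ℝ)
    (V : (τ : ℕ) → Matrix (Fin dOut) (Fin (m τ)) ℝ)
    (hV₀ : V 0 = W₀ * K 0)
    (Rp : Matrix (Fin dOut) (Fin dIn) ℝ → Matrix (Fin dOut) (Fin dIn) ℝ)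
    (C : ℕ → Matrix (Fin dIn) (Fin dIn) ℝ)
    (hC : ∀ t : ℕ, C t = ∑ τ ∈ Finset.range (t + 1), K τ * (K τ)ᵀ)
    (hCinv : ∀ t, Invertible (C t))
    (WR Δ Err : ℕ → Matrix (Fin dOut) (Fin dIn) ℝ)
    (hE₀ : Err 0 = 0)
    (hWR₀ : WR 0 = W₀)
    (hΔ : ∀ t, 1 ≤ t →
      Δ t = ((V t - WR (t - 1) * K t) * (K t)ᵀ - Err (t - 1)) * (C t)⁻¹)
    (hWR : ∀ t, 1 ≤ t → WR t = WR (t - 1) + Rp (Δ t))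
    (hErr : ∀ t, 1 ≤ t → Err t = (Rp (Δ t) - Δ t) * C t) :
    ∀ t, 1 ≤ t →
      Err (t - 1) = -∑ τ ∈ Finset.range t, (V τ - WR (t - 1) * K τ) * (K τ)ᵀ ∧
      Δ t * C t = ∑ τ ∈ Finset.range (t + 1), (V τ - WR (t - 1) * K τ) * (K τ)ᵀ := by
  have step : ∀ n, Err n = -∑ τ ∈ Finset.range (n + 1), (V τ - WR n * K τ) * (K τ)ᵀ →
      Δ (n + 1) * C (n + 1) =
        ∑ τ ∈ Finset.range (n + 1 + 1), (V τ - WR n * K τ) * (K τ)ᵀ := by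
    intro n hn
    have := hCinv (n + 1)
    rw [hΔ (n + 1) (by omega), Nat.add_sub_cancel, Matrix.mul_assoc,
      Matrix.inv_mul_of_invertible, Matrix.mul_one, hn, Finset.sum_range_succ _ (n + 1)]
    abel
  have main : ∀ n, Err n = -∑ τ ∈ Finset.range (n + 1), (V τ - WR n * K τ) * (K τ)ᵀ := by
    intro n
    induction n with
    | zero => simp [hE₀, hWR₀, hV₀]
    | succ n ih =>
      have h := step n ih
      rw [hErr (n + 1) (by omega), Matrix.sub_mul, h, hWR (n + 1) (by omega),
        Nat.add_sub_cancel, hC, Matrix.mul_sum, ← Finset.sum_sub_distrib,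
        ← Finset.sum_neg_distrib]
      refine Finset.sum_congr rfl fun τ _ => ?_
      simp only [Matrix.sub_mul, Matrix.add_mul, Matrix.mul_assoc]
      abel
  intro t ht
  obtain ⟨n, rfl⟩ : ∃ n, t = n + 1 := ⟨t - 1, by omega⟩
  rw [Nat.add_sub_cancel]
  exact ⟨main n, step n (main n)⟩
end
end
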